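/- The following hold on W: ν(W)·E_tE*_rE_t = E_t and ν(W)·E*_rE_tE*_r = E*_r; that is, for all w ∈ W, ν(W)E_tE*_rE_t w = E_t w and ν(W)E*_rE_tE*_r w = E*_r w. -/

import Mathlib

open Matrix
open scoped Classical

noncomputable section

/-- The full setup: a `Q`-polynomial distance-regular graph `Γ = (X,R)` of diameter `D ≥ 3`,
with adjacency matrix `A`, primitive idempotents `E_i`, eigenvalues `θ_i`,
Krein parameters `q^h_{ij}`, a fixed base vertex `x`, dual primitive idempotents `E*_i`,
dual adjacency matrix `A*` and dual eigenvalues `θ*_i`. -/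
structure TSetup (X : Type*) [Fintype X] [DecidableEq X] where
  G : SimpleGraph X
  hGconn : G.Connected
  D : ℕ
  hD3 : 3 ≤ D
  hDiamLe : ∀ y z : X, G.dist y z ≤ D
  hDiamEq : ∃ y z : X, G.dist y z = D
  p : ℕ → ℕ → ℕ → ℕ
  hDRG : ∀ h i j : ℕ, h ≤ D → i ≤ D → j ≤ D → ∀ y z : X, G.dist y z = h →
    Nat.card {w : X // G.dist y w = i ∧ G.dist z w = j} = p h i j
  A : Matrix X X ℂ
  hA : ∀ y z : X, A y z = if G.Adj y z then 1 else 0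
  E : ℕ → Matrix X X ℂ
  hEzero : ∀ i : ℕ, D < i → E i = 0
  hEsum : ∑ i ∈ Finset.range (D + 1), E i = 1
  hEidem : ∀ i j : ℕ, i ≤ D → j ≤ D → E i * E j = if i = j then E i else 0
  hEsymm : ∀ i : ℕ, (E i)ᵀ = E i
  hEreal : ∀ i : ℕ, (E i).map (starRingEnd ℂ) = E i
  hE0 : E 0 = (Fintype.card X : ℂ)⁻¹ • Matrix.of (fun _ _ => (1 : ℂ))
  θ : ℕ → ℝ
  hθinj : ∀ i j : ℕ, i ≤ D → j ≤ D → θ i = θ j → i = j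
  hAspec : A = ∑ i ∈ Finset.range (D + 1), (θ i : ℂ) • E i
  q : ℕ → ℕ → ℕ → ℝ
  hKrein : ∀ i j : ℕ, i ≤ D → j ≤ D →
    Matrix.hadamard (E i) (E j) =
      (Fintype.card X : ℂ)⁻¹ • ∑ h ∈ Finset.range (D + 1), (q h i j : ℂ) • E h
  hQpoly0 : ∀ h i j : ℕ, h ≤ D → i ≤ D → j ≤ D →
    (i + j < h ∨ h + j < i ∨ h + i < j) → q h i j = 0
  hQpoly1 : ∀ h i j : ℕ, h ≤ D → i ≤ D → j ≤ D →
    (h = i + j ∨ i = h + j ∨ j = h + i) → q h i j ≠ 0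
  x : X
  Estar : ℕ → Matrix X X ℂ
  hEstarzero : ∀ i : ℕ, D < i → Estar i = 0
  hEstar : ∀ i : ℕ, i ≤ D → ∀ y z : X,
    Estar i y z = if y = z ∧ G.dist x y = i then 1 else 0
  Astar : Matrix X X ℂ
  hAstar : ∀ y z : X, Astar y z = if y = z then (Fintype.card X : ℂ) * E 1 x y else 0
  θstar : ℕ → ℝ
  hθstarinj : ∀ i j : ℕ, i ≤ D → j ≤ D → θstar i = θstar j → i = j
  hAstarspec : Astar = ∑ i ∈ Finset.range (D + 1), (θstar i : ℂ) • Estar i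

variable {X : Type*} [Fintype X] [DecidableEq X]

/-- The Terwilliger algebra `T = T(x)`, generated by `A` and `A*`. -/
def TSetup.T (S : TSetup X) : Subalgebra ℂ (Matrix X X ℂ) :=
  Algebra.adjoin ℂ {S.A, S.Astar}

/-- A thin irreducible `T`-module `W` with endpoint `r`, dual endpoint `t` and diameter `d`,
where `E*_i W ≠ 0` iff `r ≤ i ≤ r + d` and `E_i W ≠ 0` iff `t ≤ i ≤ t + d`. -/
structure TMod (S : TSetup X) where
  W : Submodule ℂ (X → ℂ)
  hWinv : ∀ B ∈ S.T, ∀ w ∈ W, B *ᵥ w ∈ W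
  hWne : W ≠ ⊥
  hWirr : ∀ U : Submodule ℂ (X → ℂ), U ≤ W →
    (∀ B ∈ S.T, ∀ w ∈ U, B *ᵥ w ∈ U) → U = ⊥ ∨ U = W
  hthin : ∀ i : ℕ, Module.finrank ℂ (W.map (S.Estar i).mulVecLin) ≤ 1
  r : ℕ
  t : ℕ
  d : ℕ
  hr : ∀ i : ℕ, W.map (S.Estar i).mulVecLin ≠ ⊥ ↔ r ≤ i ∧ i ≤ r + d
  ht : ∀ i : ℕ, W.map (S.E i).mulVecLin ≠ ⊥ ↔ t ≤ i ∧ i ≤ t + d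

open Classical in
/-- The action of a matrix `B` on `W` (the restriction of `B` to `W`; defined to be `0`
if `B` does not leave `W` invariant). -/
def actW (S : TSetup X) (M : TMod S) (B : Matrix X X ℂ) : M.W →ₗ[ℂ] M.W :=
  if h : ∀ w ∈ M.W, B.mulVecLin w ∈ M.W then B.mulVecLin.restrict h else 0

/-- `tr_W(B)`: the trace of the action of `B` on `W`. -/
def trW (S : TSetup X) (M : TMod S) (B : Matrix X X ℂ) : ℂ :=
  LinearMap.trace ℂ M.W (actW S M B)

/-- `a_i(W) = tr_W(E*_{r+i} A)`. -/
def aW (S : TSetup X) (M : TMod S) (i : ℕ) : ℂ :=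
  trW S M (S.Estar (M.r + i) * S.A)

/-- `x_i(W) = tr_W(E*_{r+i} A E*_{r+i-1} A)`, with `x_0(W) = 0`. -/
def xW (S : TSetup X) (M : TMod S) (i : ℕ) : ℂ :=
  if i = 0 then 0 else trW S M (S.Estar (M.r + i) * S.A * S.Estar (M.r + i - 1) * S.A)

/-- `a*_i(W) = tr_W(E_{t+i} A*)`. -/
def astarW (S : TSetup X) (M : TMod S) (i : ℕ) : ℂ :=
  trW S M (S.E (M.t + i) * S.Astar)

/-- `x*_i(W) = tr_W(E_{t+i} A* E_{t+i-1} A*)`, with `x*_0(W) = 0`. -/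
def xstarW (S : TSetup X) (M : TMod S) (i : ℕ) : ℂ :=
  if i = 0 then 0 else trW S M (S.E (M.t + i) * S.Astar * S.E (M.t + i - 1) * S.Astar)

/-- The polynomials `p_i`: `p_0 = 1`, `p_{-1} = 0`,
`λ p_i = p_{i+1} + a_i(W) p_i + x_i(W) p_{i-1}`. -/
def pW (S : TSetup X) (M : TMod S) : ℕ → Polynomial ℂ
  | 0 => 1
  | 1 => Polynomial.X - Polynomial.C (aW S M 0)
  | (n + 2) =>
      (Polynomial.X - Polynomial.C (aW S M (n + 1))) * pW S M (n + 1)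
        - Polynomial.C (xW S M (n + 1)) * pW S M n

/-- The polynomials `p*_i`: `p*_0 = 1`, `p*_{-1} = 0`,
`λ p*_i = p*_{i+1} + a*_i(W) p*_i + x*_i(W) p*_{i-1}`. -/
def pstarW (S : TSetup X) (M : TMod S) : ℕ → Polynomial ℂ
  | 0 => 1
  | 1 => Polynomial.X - Polynomial.C (astarW S M 0)
  | (n + 2) =>
      (Polynomial.X - Polynomial.C (astarW S M (n + 1))) * pstarW S M (n + 1)
        - Polynomial.C (xstarW S M (n + 1)) * pstarW S M n

/-- The Hermitian inner product `⟨u,v⟩ = Σ_y u_y conj(v_y)` on `ℂ^X`. -/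
def herm (u v : X → ℂ) : ℂ := ∑ y, u y * (starRingEnd ℂ) (v y)

/-- `ν(W)`, the multiplicative inverse of `m_0(W) = tr_W(E_t E*_r)`. -/
def nuW (S : TSetup X) (M : TMod S) : ℂ :=
  (trW S M (S.E M.t * S.Estar M.r))⁻¹

/-- `k_i(W) = ν(W) m*_i(W)` where `m*_i(W) = tr_W(E*_{r+i} E_t)`. -/
def kW (S : TSetup X) (M : TMod S) (i : ℕ) : ℂ :=
  nuW S M * trW S M (S.Estar (M.r + i) * S.E M.t)

/-- `k*_i(W) = ν(W) m_i(W)` where `m_i(W) = tr_W(E_{t+i} E*_r)`. -/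
def kstarW (S : TSetup X) (M : TMod S) (i : ℕ) : ℂ :=
  nuW S M * trW S M (S.E (M.t + i) * S.Estar M.r)

theorem idem_mem_aux (D : ℕ) (A : Matrix X X ℂ) (E : ℕ → Matrix X X ℂ) (θ : ℕ → ℝ)
    (hsum : ∑ i ∈ Finset.range (D + 1), E i = 1)
    (hidem : ∀ i j : ℕ, i ≤ D → j ≤ D → E i * E j = if i = j then E i else 0)
    (hinj : ∀ i j : ℕ, i ≤ D → j ≤ D → θ i = θ j → i = j)
    (hA : A = ∑ i ∈ Finset.range (D + 1), (θ i : ℂ) • E i)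
    (T : Subalgebra ℂ (Matrix X X ℂ)) (hT : A ∈ T) (i : ℕ) (hi : i ≤ D) : E i ∈ T := by
  have hAE : ∀ j, j ≤ D → A * E j = (θ j : ℂ) • E j := by
    intro j hj
    rw [hA, Finset.sum_mul, Finset.sum_eq_single j]
    · rw [smul_mul_assoc, hidem j j hj hj, if_pos rfl]
    · intro b hb hbj
      rw [smul_mul_assoc, hidem b j (by simpa [Nat.lt_succ_iff] using hb) hj, if_neg hbj, smul_zero]
    · intro h
      exact absurd (Finset.mem_range.2 (Nat.lt_succ_of_le hj)) h
  have hpE : ∀ (p : Polynomial ℂ) j, j ≤ D →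
      Polynomial.aeval A p * E j = (p.eval (θ j : ℂ)) • E j := by
    intro p j hj
    induction p using Polynomial.induction_on' with
    | add p q hp hq => simp [add_mul, hp, hq, add_smul]
    | monomial n a =>
      have : A ^ n * E j = ((θ j : ℂ) ^ n) • E j := by
        induction n with
        | zero => simp
        | succ n ih => rw [pow_succ, mul_assoc, hAE j hj, mul_smul_comm, ih, smul_smul, pow_succ, mul_comm]
      rw [Polynomial.aeval_monomial, mul_assoc, this, Polynomial.eval_monomial,
        ← Algebra.smul_def, smul_smul]
  let p := Lagrange.basis (Finset.range (D + 1)) (fun k => (θ k : ℂ)) i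
  have hp : Polynomial.aeval A p = E i := by
    rw [← mul_one (Polynomial.aeval A p), ← hsum, Finset.mul_sum, Finset.sum_eq_single i]
    · rw [hpE p i hi]
      have : p.eval (θ i : ℂ) = 1 := by
        apply Lagrange.eval_basis_self (v := fun k => (θ k : ℂ))
        · intro a ha b hb hab
          simp only [Finset.coe_range, Set.mem_Iio, Nat.lt_succ_iff] at ha hb
          exact hinj a b ha hb (Complex.ofReal_injective hab)
        · exact Finset.mem_range.2 (Nat.lt_succ_of_le hi)
      rw [this, one_smul]
    · intro j hj hji
      rw [hpE p j (by simpa [Nat.lt_succ_iff] using hj)]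
      have : p.eval (θ j : ℂ) = 0 :=
        Lagrange.eval_basis_of_ne (v := fun k => (θ k : ℂ)) (Ne.symm hji) hj
      rw [this, zero_smul]
    · intro h
      exact absurd (Finset.mem_range.2 (Nat.lt_succ_of_le hi)) h
  rw [← hp]
  exact Polynomial.aeval_mem_adjoin_singleton ℂ A |> fun h =>
    (Algebra.adjoin_le (S := T) (by simpa using hT)) h

theorem Estar_idem (S : TSetup X) (i j : ℕ) (hi : i ≤ S.D) (hj : j ≤ S.D) :
    S.Estar i * S.Estar j = if i = j then S.Estar i else 0 := by
  have hdiag : ∀ i, i ≤ S.D →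
      S.Estar i = Matrix.diagonal (fun y => if S.G.dist S.x y = i then (1 : ℂ) else 0) := by
    intro i hi
    ext y z
    rw [S.hEstar i hi, Matrix.diagonal_apply]
    by_cases h : y = z <;> simp [h]
  rw [hdiag i hi, hdiag j hj, Matrix.diagonal_mul_diagonal]
  split_ifs with h
  · subst h
    congr 1; ext y; simp
  · rw [← Matrix.diagonal_zero]
    congr 1; ext y
    by_cases h1 : S.G.dist S.x y = i
    · simp [h1, h]
    · simp [h1]

theorem Estar_sum (S : TSetup X) : ∑ i ∈ Finset.range (S.D + 1), S.Estar i = 1 := by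
  ext y z
  rw [Matrix.sum_apply, Finset.sum_eq_single (S.G.dist S.x y)]
  · rw [S.hEstar _ (S.hDiamLe _ _), Matrix.one_apply]
    simp
  · intro b hb hne
    rw [S.hEstar b (by simpa [Nat.lt_succ_iff] using hb)]
    rw [if_neg]
    rintro ⟨-, h⟩
    exact hne h.symm
  · intro h
    exact absurd (Finset.mem_range.2 (Nat.lt_succ_of_le (S.hDiamLe _ _))) h

theorem E_mem (S : TSetup X) (i : ℕ) : S.E i ∈ S.T := by
  by_cases hi : i ≤ S.D
  · exact idem_mem_aux S.D S.A S.E S.θ S.hEsum S.hEidem S.hθinj S.hAspec S.T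
      (Algebra.subset_adjoin (by simp)) i hi
  · rw [S.hEzero i (not_le.1 hi)]; exact S.T.zero_mem

theorem Estar_mem (S : TSetup X) (i : ℕ) : S.Estar i ∈ S.T := by
  by_cases hi : i ≤ S.D
  · exact idem_mem_aux S.D S.Astar S.Estar S.θstar (Estar_sum S) (Estar_idem S) S.hθstarinj
      S.hAstarspec S.T (Algebra.subset_adjoin (by simp)) i hi
  · rw [S.hEstarzero i (not_le.1 hi)]; exact S.T.zero_mem

theorem actW_coe (S : TSetup X) (M : TMod S) (B : Matrix X X ℂ) (hB : B ∈ S.T) (w : M.W) :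
    ((actW S M B w : M.W) : X → ℂ) = B *ᵥ (w : X → ℂ) := by
  have h : ∀ w ∈ M.W, B.mulVecLin w ∈ M.W := fun w hw => M.hWinv B hB w hw
  unfold actW
  rw [dif_pos h]
  rfl

theorem actW_mul (S : TSetup X) (M : TMod S) (B C : Matrix X X ℂ) (hB : B ∈ S.T)
    (hC : C ∈ S.T) : actW S M (B * C) = actW S M B * actW S M C := by
  ext1 w
  apply Subtype.ext
  rw [actW_coe S M _ (S.T.mul_mem hB hC), Module.End.mul_apply, actW_coe S M _ hB,
    actW_coe S M _ hC, Matrix.mulVec_mulVec]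

theorem actW_finrank (S : TSetup X) (M : TMod S) (B : Matrix X X ℂ) (hB : B ∈ S.T) :
    Module.finrank ℂ (LinearMap.range (actW S M B)) =
      Module.finrank ℂ (M.W.map B.mulVecLin) := by
  rw [← Submodule.finrank_map_subtype_eq M.W (LinearMap.range (actW S M B))]
  have : (LinearMap.range (actW S M B)).map M.W.subtype = M.W.map B.mulVecLin := by
    ext v
    constructor
    · rintro ⟨_, ⟨w, rfl⟩, rfl⟩
      exact ⟨w, w.2, (actW_coe S M B hB w).symm⟩
    · rintro ⟨w, hw, rfl⟩
      exact ⟨_, ⟨⟨w, hw⟩, rfl⟩, actW_coe S M B hB ⟨w, hw⟩⟩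
  rw [this]

theorem trace_of_idem {V : Type*} [AddCommGroup V] [Module ℂ V] [FiniteDimensional ℂ V]
    (f : V →ₗ[ℂ] V) (hf : f * f = f) :
    LinearMap.trace ℂ V f = (Module.finrank ℂ (LinearMap.range f) : ℂ) := by
  have : LinearMap.IsProj (LinearMap.range f) f := by
    refine ⟨fun v => ⟨v, rfl⟩, ?_⟩
    rintro _ ⟨v, rfl⟩
    exact LinearMap.congr_fun hf v
  exact this.trace

theorem finrank_sum_aux (S : TSetup X) (M : TMod S) (F : ℕ → Matrix X X ℂ)
    (hF : ∀ i, F i ∈ S.T)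
    (hsum : ∑ i ∈ Finset.range (S.D + 1), F i = 1)
    (hidem : ∀ i j : ℕ, i ≤ S.D → j ≤ S.D → F i * F j = if i = j then F i else 0) :
    ∑ i ∈ Finset.range (S.D + 1), Module.finrank ℂ (M.W.map (F i).mulVecLin) =
      Module.finrank ℂ M.W := by
  have h1 : ∑ i ∈ Finset.range (S.D + 1), actW S M (F i) = 1 := by
    ext1 w
    apply Subtype.ext
    rw [LinearMap.sum_apply, AddSubmonoidClass.coe_finsetSum]
    simp_rw [fun i => actW_coe S M _ (hF i) w]
    rw [← Matrix.sum_mulVec, hsum, Matrix.one_mulVec]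
    rfl
  have h2 := congrArg (LinearMap.trace ℂ M.W) h1
  rw [map_sum, LinearMap.trace_one] at h2
  have h3 : ∀ i ∈ Finset.range (S.D + 1), LinearMap.trace ℂ M.W (actW S M (F i)) =
      (Module.finrank ℂ (M.W.map (F i).mulVecLin) : ℂ) := by
    intro i hi
    have hi' : i ≤ S.D := by simpa [Nat.lt_succ_iff] using hi
    rw [trace_of_idem, actW_finrank S M _ (hF i)]
    rw [← actW_mul S M _ _ (hF i) (hF i), hidem i i hi' hi', if_pos rfl]
  rw [Finset.sum_congr rfl h3] at h2
  exact_mod_cast h2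

theorem rank_one_aux {V : Type*} [AddCommGroup V] [Module ℂ V] [FiniteDimensional ℂ V]
    (P B : V →ₗ[ℂ] V) (hP : Module.finrank ℂ (LinearMap.range P) ≤ 1) :
    P * B * P = LinearMap.trace ℂ V (B * P) • P := by
  obtain ⟨v, hv⟩ := finrank_le_one_iff.1 hP
  choose c hc using hv
  by_cases hv0 : v = 0
  · have : P = 0 := by
      ext w
      have := hc ⟨P w, w, rfl⟩
      rw [hv0, smul_zero] at this
      simpa using (congrArg Subtype.val this).symm
    simp [this]
  have hv0' : (v : V) ≠ 0 := fun h => hv0 (Subtype.ext h)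
  let φ : V →ₗ[ℂ] ℂ :=
    { toFun := fun w => c ⟨P w, w, rfl⟩
      map_add' := by
        intro a b
        apply smul_left_injective ℂ hv0'
        have h1 := congrArg Subtype.val (hc ⟨P a, a, rfl⟩)
        have h2 := congrArg Subtype.val (hc ⟨P b, b, rfl⟩)
        have h3 := congrArg Subtype.val (hc ⟨P (a + b), a + b, rfl⟩)
        simp only [Submodule.coe_smul] at h1 h2 h3
        simp only [add_smul]
        rw [h1, h2, h3, map_add]
      map_smul' := by
        intro m a
        apply smul_left_injective ℂ hv0'
        have h1 := congrArg Subtype.val (hc ⟨P a, a, rfl⟩)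
        have h3 := congrArg Subtype.val (hc ⟨P (m • a), m • a, rfl⟩)
        simp only [Submodule.coe_smul] at h1 h3
        simp only [RingHom.id_apply, smul_eq_mul, mul_smul]
        rw [h1, h3, map_smul] }
  have hφ : ∀ w, P w = φ w • (v : V) := fun w =>
    (congrArg Subtype.val (hc ⟨P w, w, rfl⟩)).symm
  have hBP : B * P = φ.smulRight (B v) := by
    ext w
    simp [hφ]
  rw [hBP, LinearMap.trace_smulRight]
  ext w
  simp only [Module.End.mul_apply, LinearMap.smul_apply, hφ, map_smul, smul_eq_mul, smul_smul]
  rw [mul_comm]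

theorem finrank_E_t (S : TSetup X) (M : TMod S) :
    Module.finrank ℂ (M.W.map (S.E M.t).mulVecLin) ≤ 1 := by
  have h1 := finrank_sum_aux S M S.E (E_mem S) S.hEsum S.hEidem
  have h2 := finrank_sum_aux S M S.Estar (Estar_mem S) (Estar_sum S) (Estar_idem S)
  have hW : Module.finrank ℂ M.W ≤ M.d + 1 := by
    rw [← h2]
    calc _ ≤ ∑ i ∈ Finset.range (S.D + 1), if i ∈ Finset.Icc M.r (M.r + M.d) then 1 else 0 := by
          apply Finset.sum_le_sum
          intro i _
          split_ifs with h
          · exact M.hthin i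
          · have : M.W.map (S.Estar i).mulVecLin = ⊥ := by
              by_contra hne
              exact h (Finset.mem_Icc.2 ((M.hr i).1 hne))
            rw [this]; simp
      _ ≤ (Finset.Icc M.r (M.r + M.d)).card := by
          rw [Finset.sum_ite_mem, Finset.sum_const, smul_eq_mul, mul_one]
          exact Finset.card_le_card Finset.inter_subset_right
      _ = M.d + 1 := by rw [Nat.card_Icc]; omega
  have hpos : ∀ i ∈ Finset.Icc M.t (M.t + M.d),
      1 ≤ Module.finrank ℂ (M.W.map (S.E i).mulVecLin) := by
    intro i hi
    exact Submodule.one_le_finrank_iff.2 ((M.ht i).2 (Finset.mem_Icc.1 hi))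
  have hsub : Finset.Icc M.t (M.t + M.d) ⊆ Finset.range (S.D + 1) := by
    intro i hi
    rw [Finset.mem_range]
    by_contra h
    apply (M.ht i).2 (Finset.mem_Icc.1 hi)
    rw [S.hEzero i (by omega)]
    simp
  have h3 := Finset.sum_le_sum_of_subset
    (f := fun i => Module.finrank ℂ (M.W.map (S.E i).mulVecLin)) hsub
  have htm : M.t ∈ Finset.Icc M.t (M.t + M.d) := by simp
  rw [← Finset.add_sum_erase _ _ htm] at h3
  have h4 : M.d ≤ ∑ i ∈ (Finset.Icc M.t (M.t + M.d)).erase M.t,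
      Module.finrank ℂ (M.W.map (S.E i).mulVecLin) := by
    calc M.d = ((Finset.Icc M.t (M.t + M.d)).erase M.t).card := by
          rw [Finset.card_erase_of_mem htm, Nat.card_Icc]; omega
      _ = ∑ i ∈ (Finset.Icc M.t (M.t + M.d)).erase M.t, 1 := by simp
      _ ≤ _ := Finset.sum_le_sum fun i hi => hpos i (Finset.mem_of_mem_erase hi)
  omega

/-- `ν(W) E_t E*_r E_t = E_t` and `ν(W) E*_r E_t E*_r = E*_r` hold on `W`, where `ν(W)` is
the multiplicative inverse of the positive real number `m_0(W) = tr_W(E_t E*_r)`. -/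
theorem stmt13 (S : TSetup X) (M : TMod S) (hd : 0 < M.d)
    (hm0 : (trW S M (S.E M.t * S.Estar M.r)).im = 0 ∧
      0 < (trW S M (S.E M.t * S.Estar M.r)).re) :
    ∀ w ∈ M.W,
      nuW S M • ((S.E M.t * S.Estar M.r * S.E M.t) *ᵥ w) = S.E M.t *ᵥ w ∧
      nuW S M • ((S.Estar M.r * S.E M.t * S.Estar M.r) *ᵥ w) = S.Estar M.r *ᵥ w := by
  have hE := E_mem S M.t
  have hEs := Estar_mem S M.r
  have hne : trW S M (S.E M.t * S.Estar M.r) ≠ 0 := by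
    intro h
    have := hm0.2
    rw [h] at this
    simp at this
  have hm : trW S M (S.E M.t * S.Estar M.r) =
      LinearMap.trace ℂ M.W (actW S M (S.E M.t) * actW S M (S.Estar M.r)) := by
    rw [trW, actW_mul S M _ _ hE hEs]
  have k1 := rank_one_aux (actW S M (S.E M.t)) (actW S M (S.Estar M.r))
    (by rw [actW_finrank S M _ hE]; exact finrank_E_t S M)
  have k2 := rank_one_aux (actW S M (S.Estar M.r)) (actW S M (S.E M.t))
    (by rw [actW_finrank S M _ hEs]; exact M.hthin M.r)
  rw [LinearMap.trace_mul_comm, ← hm, ← actW_mul S M _ _ hE hEs,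
    ← actW_mul S M _ _ (S.T.mul_mem hE hEs) hE] at k1
  rw [← hm, ← actW_mul S M _ _ hEs hE,
    ← actW_mul S M _ _ (S.T.mul_mem hEs hE) hEs] at k2
  intro w hw
  constructor
  · have h := congrArg Subtype.val (LinearMap.congr_fun k1 ⟨w, hw⟩)
    rw [LinearMap.smul_apply, Submodule.coe_smul, actW_coe S M _ hE,
      actW_coe S M _ (S.T.mul_mem (S.T.mul_mem hE hEs) hE)] at h
    rw [h, nuW, inv_smul_smul₀ hne]
  · have h := congrArg Subtype.val (LinearMap.congr_fun k2 ⟨w, hw⟩)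
    rw [LinearMap.smul_apply, Submodule.coe_smul, actW_coe S M _ hEs,
      actW_coe S M _ (S.T.mul_mem (S.T.mul_mem hEs hE) hEs)] at h
    rw [h, nuW, inv_smul_smul₀ hne]
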